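/- arXiv:2112.08805 — 3 statements merged into one kernel-verified Lean document; each statement's English description precedes it below -/
import Mathlib

section
/- Let G be a connected C4-free graph with edge-connectivity at least 3, let u be a vertex of maximum eccentricity d, and let n_i denote the number of vertices at distance i from u. If n_i = 2 and n_{i+1} = 3 for some i ≤ d-1, then i ≤ d-2 and n_{i+2} ≥ 2. -/
/-- `G` contains no cycle of length 4 as a (not necessarily induced) subgraph. -/
def C4Free {V : Type*} (G : SimpleGraph V) : Prop :=
  ¬ ∃ a b c d : V, a ≠ b ∧ a ≠ c ∧ a ≠ d ∧ b ≠ c ∧ b ≠ d ∧ c ≠ d ∧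
    G.Adj a b ∧ G.Adj b c ∧ G.Adj c d ∧ G.Adj d a

/-- `G` has edge-connectivity at least `k`: it stays connected after
deleting any set of fewer than `k` edges. -/
def EdgeConnAtLeast {V : Type*} (G : SimpleGraph V) (k : ℕ) : Prop :=
  ∀ s : Finset (Sym2 V), s.card < k → (G.deleteEdges ↑s).Connected

theorem cut_edge {V : Type*} (G : SimpleGraph V) (hec : EdgeConnAtLeast G 3)
    (S : Set V) (p q : V) (hp : p ∈ S) (hq : q ∉ S) (e f : Sym2 V) :
    ∃ x y, x ∈ S ∧ y ∉ S ∧ G.Adj x y ∧ s(x, y) ≠ e ∧ s(x, y) ≠ f := by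
  classical
  have hc := hec {e, f} (lt_of_le_of_lt Finset.card_le_two (by norm_num))
  obtain ⟨w⟩ := hc.preconnected p q
  obtain ⟨t, -, h1, h2⟩ := w.exists_boundary_dart S hp hq
  have h := t.adj
  rw [SimpleGraph.deleteEdges_adj] at h
  refine ⟨t.fst, t.snd, h1, h2, h.1, ?_, ?_⟩
  · intro h3
    exact h.2 (by simp [h3])
  · intro h3
    exact h.2 (by simp [h3])

theorem lower_nbr {V : Type*} (G : SimpleGraph V) (hconn : G.Connected) (u x : V) (i : ℕ)
    (h : G.dist u x = i + 1) : ∃ y, G.Adj x y ∧ G.dist u y = i := by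
  obtain ⟨w, hw⟩ := hconn.exists_walk_length_eq_dist x u
  rw [SimpleGraph.dist_comm, h] at hw
  cases w with
  | nil => simp at hw
  | cons hadj w' =>
    rename_i y
    refine ⟨y, hadj, ?_⟩
    have h1 := SimpleGraph.dist_le w'
    simp at hw
    have h2 := hconn.dist_triangle (u := u) (v := y) (w := x)
    rw [SimpleGraph.dist_eq_one_iff_adj.2 hadj.symm] at h2
    rw [SimpleGraph.dist_comm] at h1
    omega

theorem deg_pair {V : Type*} (G : SimpleGraph V) (hec : EdgeConnAtLeast G 3)
    (x p q r s : V) (hpx : p ≠ x)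
    (hN : ∀ v, G.Adj x v → v = p ∨ v = q ∨ v = r ∨ v = s) : G.Adj x p ∨ G.Adj x q := by
  obtain ⟨x', y, h1, h2, h3, h4, h5⟩ :=
    cut_edge G hec {x} x p rfl (by simpa using hpx) s(x, r) s(x, s)
  obtain rfl : x' = x := h1
  rcases hN y h3 with rfl | rfl | rfl | rfl
  · exact Or.inl h3
  · exact Or.inr h3
  · exact absurd rfl h4
  · exact absurd rfl h5

theorem c4 {V : Type*} {G : SimpleGraph V} (hC4 : C4Free G) {a b c d : V}
    (hac : a ≠ c) (hbd : b ≠ d) (h1 : G.Adj a b) (h2 : G.Adj b c) (h3 : G.Adj c d)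
    (h4 : G.Adj d a) : False :=
  hC4 ⟨a, b, c, d, h1.ne, hac, h4.ne.symm, h2.ne, hbd, h3.ne, h1, h2, h3, h4⟩

theorem levels_two_three {V : Type*} [Fintype V] (G : SimpleGraph V)
    (hconn : G.Connected) (hC4 : C4Free G) (hec : EdgeConnAtLeast G 3)
    (u : V) (d : ℕ)
    (hdiam : ∀ v w : V, G.dist v w ≤ d) (hecc : ∃ v, G.dist u v = d)
    (n : ℕ → ℕ) (hn : ∀ i, n i = {v : V | G.dist u v = i}.ncard)
    (i : ℕ) (hi : i + 1 ≤ d) (h1 : n i = 2) (h2 : n (i + 1) = 3) :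
    i + 2 ≤ d ∧ 2 ≤ n (i + 2) := by
  rw [hn] at h1 h2
  obtain ⟨a, b, hab, hL⟩ := Set.ncard_eq_two.1 h1
  obtain ⟨x, y, z, hxy, hxz, hyz, hM⟩ := Set.ncard_eq_three.1 h2
  have hL' : ∀ v, G.dist u v = i ↔ v = a ∨ v = b := fun v => by
    simpa using Set.ext_iff.1 hL v
  have hM' : ∀ v, G.dist u v = i + 1 ↔ v = x ∨ v = y ∨ v = z := fun v => by
    simpa using Set.ext_iff.1 hM v
  have da := (hL' a).2 (by simp)
  have db := (hL' b).2 (by simp)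
  have dx := (hM' x).2 (by simp)
  have dy := (hM' y).2 (by simp)
  have dz := (hM' z).2 (by simp)
  have step : ∀ v w, G.Adj v w → G.dist u w ≤ G.dist u v + 1 := by
    intro v w h
    have h2 := hconn.dist_triangle (u := u) (v := v) (w := w)
    rwa [SimpleGraph.dist_eq_one_iff_adj.2 h] at h2
  have low : ∀ v, G.dist u v = i + 1 → G.Adj v a ∨ G.Adj v b := by
    intro v hv
    obtain ⟨t, ht, ht'⟩ := lower_nbr G hconn u v i hv
    rcases (hL' t).1 ht' with rfl | rfl
    · exact Or.inl ht
    · exact Or.inr ht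
  have lx := low x dx
  have ly := low y dy
  have lz := low z dz
  have hne : ∀ v w, G.dist u v = i → G.dist u w = i + 1 → v ≠ w := by
    rintro v w h h' rfl
    omega
  have hcases : n (i + 2) = 0 ∨ n (i + 2) = 1 ∨ 2 ≤ n (i + 2) := by omega
  rcases hcases with h0 | h0 | h0
  · exfalso
    rw [hn, Set.ncard_eq_zero] at h0
    have hno : ∀ v, G.dist u v ≠ i + 2 := fun v hv => by
      have : v ∈ {v : V | G.dist u v = i + 2} := hv
      rw [h0] at this
      exact this
    have nb : ∀ v, G.dist u v = i + 1 → ∀ w, G.Adj v w →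
        w = a ∨ w = b ∨ w = x ∨ w = y ∨ w = z := by
      intro v hv w hw
      have s1 := step v w hw
      have s2 := step w v hw.symm
      have s3 := hno w
      have : G.dist u w = i ∨ G.dist u w = i + 1 := by omega
      rcases this with h | h
      · rcases (hL' w).1 h with h | h <;> simp [h]
      · rcases (hM' w).1 h with h | h | h <;> simp [h]
    have key : ∀ v p q, G.dist u v = i + 1 → G.dist u p = i + 1 → G.dist u q = i + 1 →
        v ≠ p → v ≠ q → (∀ w, w = x ∨ w = y ∨ w = z → w = v ∨ w = p ∨ w = q) →
        (G.Adj v a ∨ G.Adj v p) ∧ (G.Adj v b ∨ G.Adj v p) ∧ (G.Adj v a ∨ G.Adj v q) ∧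
        (G.Adj v b ∨ G.Adj v q) ∧ (G.Adj v p ∨ G.Adj v q) := by
      intro v p q hv hp hq hvp hvq hall
      have hN : ∀ w, G.Adj v w → w = a ∨ w = b ∨ w = p ∨ w = q := by
        intro w hw
        have := nb v hv w hw
        have h4 := hall w
        have h5 : w ≠ v := hw.ne.symm
        rcases this with h | h | h
        · exact Or.inl h
        · exact Or.inr (Or.inl h)
        · rcases h4 h with h | h | h
          · exact absurd h h5
          · exact Or.inr (Or.inr (Or.inl h))
          · exact Or.inr (Or.inr (Or.inr h))
      have ha := hne a v da hv
      have hb := hne b v db hv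
      refine ⟨deg_pair G hec v a p b q ha ?_, deg_pair G hec v b p a q hb ?_,
        deg_pair G hec v a q b p ha ?_, deg_pair G hec v b q a p hb ?_,
        deg_pair G hec v p q a b hvp.symm ?_⟩ <;>
      · intro w hw
        rcases hN w hw with h | h | h | h <;> simp [h]
    have kx := key x y z dx dy dz hxy hxz (fun t ht => by rcases ht with h | h | h <;> simp [h])
    have ky := key y x z dy dx dz hxy.symm hyz (fun t ht => by rcases ht with h | h | h <;> simp [h])
    have kz := key z x y dz dx dy hxz.symm hyz.symm (fun t ht => by rcases ht with h | h | h <;> simp [h])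
    have fin : ∀ c c' p q r, c ≠ c' → G.dist u c = i → p ≠ q → p ≠ r → q ≠ r →
        G.dist u p = i + 1 → G.dist u q = i + 1 → G.dist u r = i + 1 → G.Adj p c → G.Adj q c →
        (G.Adj p c' ∨ G.Adj p r) → (G.Adj q c' ∨ G.Adj q r) → 
        (G.Adj p q ∨ G.Adj p r) → (G.Adj q p ∨ G.Adj q r) →
        (G.Adj r c ∨ G.Adj r p) → (G.Adj r c ∨ G.Adj r q) → False := by
      intro c c' p q r hcc hc hpq hpr hqr hp hq hr pc qc A B C D E F
      have hcr := hne c r hc hr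
      have T1 : ¬ (G.Adj p r ∧ G.Adj q r) := fun h =>
        c4 hC4 hcr hpq pc.symm h.1 h.2.symm qc
      have T2 : ¬ (G.Adj p c' ∧ G.Adj q c') := fun h =>
        c4 hC4 hcc hpq pc.symm h.1 h.2.symm qc
      have T3 : ¬ (G.Adj r c ∧ G.Adj q r ∧ G.Adj p q) := fun h =>
        c4 hC4 (hne c q hc hq) hpr.symm h.1.symm h.2.1.symm h.2.2.symm pc
      have T4 : ¬ (G.Adj r c ∧ G.Adj p r ∧ G.Adj p q) := fun h =>
        c4 hC4 (hne c p hc hp) hqr.symm h.1.symm h.2.1.symm h.2.2 qc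
      rw [G.adj_comm r p] at E
      rw [G.adj_comm r q] at F
      rw [G.adj_comm q p] at D
      clear kx ky kz key nb lx ly lz low
      grind only
    have f1 := fin a b x y z hab da hxy hxz hyz dx dy dz
    have f2 := fin b a x y z hab.symm db hxy hxz hyz dx dy dz
    have f3 := fin a b x z y hab da hxz hxy hyz.symm dx dz dy
    have f4 := fin b a x z y hab.symm db hxz hxy hyz.symm dx dz dy
    have f5 := fin a b y z x hab da hyz hxy.symm hxz.symm dy dz dx
    have f6 := fin b a y z x hab.symm db hyz hxy.symm hxz.symm dy dz dx
    have pig : (G.Adj x a ∧ G.Adj y a) ∨ (G.Adj x b ∧ G.Adj y b) ∨ (G.Adj x a ∧ G.Adj z a) ∨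
        (G.Adj x b ∧ G.Adj z b) ∨ (G.Adj y a ∧ G.Adj z a) ∨ (G.Adj y b ∧ G.Adj z b) := by
      rcases lx with l | l <;> rcases ly with l' | l' <;> rcases lz with l'' | l'' <;>
        simp only [l, l', l'', true_and, and_true, true_or, or_true]
    obtain ⟨x1, x2, x3, x4, x5⟩ := kx
    obtain ⟨y1, y2, y3, y4, y5⟩ := ky
    obtain ⟨z1, z2, z3, z4, z5⟩ := kz
    rcases pig with ⟨g, g'⟩ | ⟨g, g'⟩ | ⟨g, g'⟩ | ⟨g, g'⟩ | ⟨g, g'⟩ | ⟨g, g'⟩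
    · apply f1 g g' <;> first | assumption | (apply Or.symm; assumption)
    · apply f2 g g' <;> first | assumption | (apply Or.symm; assumption)
    · apply f3 g g' <;> first | assumption | (apply Or.symm; assumption)
    · apply f4 g g' <;> first | assumption | (apply Or.symm; assumption)
    · apply f5 g g' <;> first | assumption | (apply Or.symm; assumption)
    · apply f6 g g' <;> first | assumption | (apply Or.symm; assumption)
  · exfalso
    rw [hn] at h0
    obtain ⟨w, hw⟩ := Set.ncard_eq_one.1 h0
    have hw' : ∀ v, G.dist u v = i + 2 ↔ v = w := fun v => by
      simpa using Set.ext_iff.1 hw v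
    have dw := (hw' w).2 rfl
    have key : ∀ p q r, G.dist u p = i + 1 → 
        (∀ t, t = x ∨ t = y ∨ t = z → t = p ∨ t = q ∨ t = r) → G.Adj p w := by
      intro p q r hp hall
      obtain ⟨s, t, hs, ht, hst, g1, g2⟩ := cut_edge G hec {v | G.dist u v ≤ i + 1} p w
        (by simp [hp]) (by simp [dw]) s(q, w) s(r, w)
      simp only [Set.mem_setOf_eq] at hs ht
      have := step s t hst
      obtain rfl := (hw' t).1 (by omega)
      rcases hall s ((hM' s).1 (by omega)) with rfl | rfl | rfl
      · exact hst
      · exact absurd rfl g1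
      · exact absurd rfl g2
    have xw := key x y z dx (fun t ht => by rcases ht with h | h | h <;> simp [h])
    have yw := key y x z dy (fun t ht => by rcases ht with h | h | h <;> simp [h])
    have zw := key z x y dz (fun t ht => by rcases ht with h | h | h <;> simp [h])
    have fin : ∀ c p q, G.dist u c = i → p ≠ q → G.Adj p w → G.Adj q w → 
        G.Adj p c → G.Adj q c → False := by
      intro c p q hc hpq pw qw pc qc
      refine c4 hC4 (a := c) (c := w) ?_ hpq pc.symm pw qw.symm qc
      rintro rfl
      omega
    have f1 := fin a x y da hxy xw yw
    have f2 := fin b x y db hxy xw yw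
    have f3 := fin a x z da hxz xw zw
    have f4 := fin b x z db hxz xw zw
    have f5 := fin a y z da hyz yw zw
    have f6 := fin b y z db hyz yw zw
    rcases lx with l | l <;> rcases ly with l' | l' <;> rcases lz with l'' | l'' <;>
      simp_all only
  · refine ⟨?_, h0⟩
    have h3 : {v : V | G.dist u v = i + 2}.Nonempty := by
      apply Set.nonempty_of_ncard_ne_zero
      rw [← hn]
      omega
    obtain ⟨v, hv⟩ := h3
    have := hdiam u v
    have hv' : G.dist u v = i + 2 := hv
    omega
end

section
/- For every odd prime power q ≥ 7 and every positive integer k, there exists a connected C4-free graph of order (q²+q-1)k + 1, diameter 4k, and edge-connectivity at least q-6. -/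
namespace C4Aux

/-- common-neighbour form of being C4-free -/
def CN {V : Type} (G : SimpleGraph V) : Prop :=
  ∀ p r x y : V, G.Adj p x → G.Adj p y → G.Adj r x → G.Adj r y → p = r ∨ x = y

/-- adjacency of the block -/
def badj {F : Type} [Field F] : F × Option F → F × Option F → Prop
  | (_, none), (_, none) => False
  | (a, none), (c, some _) => a = c
  | (a, some _), (c, none) => a = c
  | (a, some b), (c, some d) =>
      b + d = a * c ∧ ¬ (a = c ∧ b = d) ∧ ¬ (a = 0 ∧ c = 1) ∧ ¬ (a = 1 ∧ c = 0)

/-- the block: the polarity graph minus a vertex and a matching -/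
def block (F : Type) [Field F] : SimpleGraph (F × Option F) where
  Adj := badj
  symm := ⟨by
    rintro ⟨a, _ | b⟩ ⟨c, _ | d⟩ h <;> simp only [badj] at h ⊢
    · exact h.symm
    · exact h.symm
    · obtain ⟨h1, h2, h3, h4⟩ := h
      refine ⟨by rw [add_comm, h1, mul_comm], ?_, ?_, ?_⟩ <;> tauto⟩
  loopless := ⟨by
    rintro ⟨a, _ | b⟩ h <;> simp [badj] at h⟩

variable {F : Type} [Field F]

theorem adj_up (a b : F) : (block F).Adj (a, none) (a, some b) := rfl

theorem adj_dn (a b : F) : (block F).Adj (a, some b) (a, none) := rfl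

theorem adj_mid (a b x d : F) (h : b + d = a * x) (hx : a ≠ x) (h0 : x ≠ 0) (h1 : x ≠ 1) :
    (block F).Adj (a, some b) (x, some d) :=
  ⟨h, fun h => hx h.1, fun h => h1 h.2, fun h => h0 h.2⟩

theorem block_cn : CN (block F) := by
  rintro ⟨a, _ | b⟩ ⟨c, _ | d⟩ ⟨x, _ | y⟩ ⟨z, _ | w⟩ h1 h2 h3 h4 <;>
    simp only [block, badj] at h1 h2 h3 h4 <;>
    simp only [Prod.mk.injEq, Option.some.injEq, reduceCtorEq, and_true, and_false, or_false,
      false_or]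
  all_goals first
    | exact h1.elim
    | exact h2.elim
    | exact h3.elim
    | exact h4.elim
    | skip
  · left; exact h1.trans h3.symm
  · obtain ⟨h3, -⟩ := h3
    obtain ⟨h4, -⟩ := h4
    subst h1 h2
    exact ⟨rfl, by linear_combination h3 - h4⟩
  · obtain ⟨h1, -⟩ := h1
    obtain ⟨h2, -⟩ := h2
    subst h3 h4
    exact ⟨rfl, by linear_combination h1 - h2⟩
  · right; exact h1.symm.trans h2
  · obtain ⟨h2, -⟩ := h2
    obtain ⟨h4, -⟩ := h4
    subst h1 h3
    exact ⟨rfl, by linear_combination h2 - h4⟩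
  · obtain ⟨h1, -⟩ := h1
    obtain ⟨h3, -⟩ := h3
    subst h2 h4
    exact ⟨rfl, by linear_combination h1 - h3⟩
  obtain ⟨h1, -⟩ := h1
  obtain ⟨h2, -⟩ := h2
  obtain ⟨h3, -⟩ := h3
  obtain ⟨h4, -⟩ := h4
  have : (a - c) * (x - z) = 0 := by linear_combination -h1 + h2 + h3 - h4
  rcases mul_eq_zero.1 this with h | h
  · left
    have : a = c := sub_eq_zero.1 h
    subst this
    exact ⟨rfl, by linear_combination h1 - h3⟩
  · right
    have : x = z := sub_eq_zero.1 h
    subst this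
    exact ⟨rfl, by linear_combination h1 - h2⟩

theorem exists_avoid [Fintype F] (hF : 7 ≤ Fintype.card F) (a c : F) :
    ∃ x : F, x ≠ 0 ∧ x ≠ 1 ∧ x ≠ a ∧ x ≠ c := by
  classical
  have : ∃ x, x ∉ ({0, 1, a, c} : Finset F) := by
    by_contra! h
    have h2 : Fintype.card F ≤ ({0, 1, a, c} : Finset F).card :=
      Finset.card_le_card (fun x _ => h x)
    have := Finset.card_le_four (a := (0:F)) (b := 1) (c := a) (d := c)
    omega
  simpa using this

/-- bounded walks -/
def WB {V : Type} (G : SimpleGraph V) (n : ℕ) : Prop :=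
  ∀ x y : V, ∃ p : G.Walk x y, p.length ≤ n

theorem wsome [Fintype F] (hF : 7 ≤ Fintype.card F) (a b : F) (y : F × Option F) :
    ∃ p : (block F).Walk (a, some b) y, p.length ≤ 4 := by
  obtain ⟨c, _ | d⟩ := y
  · obtain ⟨x, h0, h1, ha, hc⟩ := exists_avoid hF a c
    refine ⟨.cons (adj_mid a b x (a*x-b) (by ring) ha.symm h0 h1)
      (.cons (adj_mid c (c*x-(a*x-b)) x (a*x-b) (by ring) hc.symm h0 h1).symm
        (.cons (adj_dn _ _) .nil)), by simp⟩
  · obtain ⟨x, h0, h1, ha, hc⟩ := exists_avoid hF a c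
    exact ⟨.cons (adj_dn a b) (.cons (adj_up a (a*x-(c*x-d)))
      (.cons (adj_mid a _ x (c*x-d) (by ring) ha.symm h0 h1)
      (.cons (adj_mid c d x (c*x-d) (by ring) hc.symm h0 h1).symm .nil))), by simp⟩

theorem block_wb [Fintype F] (hF : 7 ≤ Fintype.card F) : WB (block F) 4 := by
  rintro ⟨a, _ | b⟩ y
  · obtain ⟨c, _ | d⟩ := y
    · obtain ⟨x, h0, h1, ha, hc⟩ := exists_avoid hF a c
      exact ⟨.cons (adj_up a (a*x)) (.cons (adj_mid a _ x 0 (by ring) ha.symm h0 h1)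
        (.cons (adj_mid c (c*x) x 0 (by ring) hc.symm h0 h1).symm (.cons (adj_dn _ _) .nil))),
        by simp⟩
    · obtain ⟨p, hp⟩ := wsome hF c d (a, none)
      exact ⟨p.reverse, by simpa using hp⟩
  · exact wsome hF a b y

/-- potential -/
def Pot {V : Type} (G : SimpleGraph V) (s t : V) (n : ℕ) : Prop :=
  ∃ φ : V → ℕ, φ s = 0 ∧ φ t = n ∧ ∀ x y, G.Adj x y → φ y ≤ φ x + 1

open Classical in
theorem block_pot : Pot (block F) (0, none) (1, none) 4 := by
  refine ⟨fun p => if p.1 = 0 then (if p.2 = none then 0 else 1) else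
    if p.1 = 1 then (if p.2 = none then 4 else 3) else 2, by simp, by simp, ?_⟩
  have h01 : (0:F) ≠ 1 := zero_ne_one
  rintro ⟨a, _ | b⟩ ⟨c, _ | d⟩ h <;> simp only [block, badj] at h <;> grind

/-- reachability form of edge connectivity -/
def EC {V : Type} (G : SimpleGraph V) (n : ℕ) : Prop :=
  ∀ s : Finset (Sym2 V), s.card < n → ∀ x y, (G.deleteEdges (s : Set (Sym2 V))).Reachable x y

theorem pigeon {E I : Type} [DecidableEq E] (s : Finset E) (T : Finset I) (h : s.card < T.card)
    (P : I → E → Prop) (hP : ∀ i ∈ T, ∀ j ∈ T, ∀ e, P i e → P j e → i = j) :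
    ∃ i ∈ T, ∀ e, P i e → e ∉ s := by
  by_contra! hc
  obtain ⟨i0, hi0⟩ : T.Nonempty := Finset.card_pos.1 (by omega)
  have : Nonempty E := ⟨(hc i0 hi0).choose⟩
  choose! f hf using hc
  have := Finset.card_le_card_of_injOn f (s := T) (t := s) (fun i hi => (hf i hi).2)
    (fun i hi j hj hij => hP i hi j hj (f i) (hf i hi).1 (hij ▸ (hf j hj).1))
  omega

theorem reach1 {V : Type} {G : SimpleGraph V} {s : Finset (Sym2 V)} {x y : V} (h : G.Adj x y)
    (h2 : s(x, y) ∉ s) : (G.deleteEdges (s : Set (Sym2 V))).Reachable x y :=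
  SimpleGraph.Adj.reachable (by rw [SimpleGraph.deleteEdges_adj]; exact ⟨h, by simpa using h2⟩)

theorem block_ec [Fintype F] (hF : 7 ≤ Fintype.card F) :
    EC (block F) (Fintype.card F - 6) := by
  classical
  intro s hs
  have key1 : ∀ a c : F, ((block F).deleteEdges (s : Set (Sym2 (F × Option F)))).Reachable
      (a, none) (c, none) := by
    intro a c
    by_cases hac : a = c
    · subst hac; rfl
    obtain ⟨x, h0, h1, ha, hc⟩ := exists_avoid hF a c
    obtain ⟨y, -, hy⟩ := pigeon s (Finset.univ : Finset F) (by rw [Finset.card_univ]; omega)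
      (fun y e => e = s(((a, none) : F × Option F), (a, some (a*x-y))) ∨
        e = s(((a, some (a*x-y)) : F × Option F), (x, some y)) ∨
        e = s(((x, some y) : F × Option F), (c, some (c*x-y))) ∨
        e = s(((c, some (c*x-y)) : F × Option F), (c, none)))
      (by
        rintro y - z - e h1 h2
        rcases h1 with rfl | rfl | rfl | rfl <;> simp at h2 <;> grind)
    refine (reach1 (adj_up a (a*x-y)) (hy _ (by simp))).trans <|
      (reach1 (adj_mid a (a*x-y) x y (by ring) ha.symm h0 h1) (hy _ (by simp))).trans <|
      (reach1 (adj_mid c (c*x-y) x y (by ring) hc.symm h0 h1).symm (hy _ (by simp))).trans <|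
      reach1 (adj_dn c (c*x-y)) (hy _ (by simp))
  have key2 : ∀ (y : F × Option F), ((block F).deleteEdges
      (s : Set (Sym2 (F × Option F)))).Reachable y (0, none) := by
    rintro ⟨a, _ | b⟩
    · exact key1 a 0
    have hcard : s.card < (Finset.univ \ ({0, 1, a} : Finset F)).card := by
      have h3 := Finset.card_le_three (a := (0:F)) (b := 1) (c := a)
      have := Finset.le_card_sdiff ({0, 1, a} : Finset F) Finset.univ
      rw [Finset.card_univ] at this
      omega
    obtain ⟨x, hx, hy⟩ := pigeon s _ hcard
      (fun x e => e = s(((a, some b) : F × Option F), (x, some (a*x-b))) ∨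
        e = s(((x, some (a*x-b)) : F × Option F), (x, none)))
      (by
        rintro y hy z hz e h1 h2
        simp at hy hz
        rcases h1 with rfl | rfl <;> simp at h2 <;> grind)
    simp at hx
    exact (reach1 (adj_mid a b x (a*x-b) (by ring) (fun h => hx.2.2 h.symm) hx.1 hx.2.1)
      (hy _ (by simp))).trans <| (reach1 (adj_dn _ _) (hy _ (by simp))).trans (key1 x 0)
  intro x y
  exact (key2 x).trans (key2 y).symm

section glue

variable {V W : Type} (G : SimpleGraph V) (B : SimpleGraph W) (t : V) (u : W)

/-- vertices of the glued graph -/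
abbrev GV {V W : Type} (t : V) (u : W) : Type := {p : V × W // p.1 = t ∨ p.2 = u}

/-- gluing `t` to `u` -/
def glue : SimpleGraph (GV t u) where
  Adj x y := (G.Adj x.1.1 y.1.1 ∧ x.1.2 = y.1.2) ∨ (x.1.1 = y.1.1 ∧ B.Adj x.1.2 y.1.2)
  symm := ⟨by
    rintro x y (h | h)
    · exact Or.inl ⟨h.1.symm, h.2.symm⟩
    · exact Or.inr ⟨h.1.symm, h.2.symm⟩⟩
  loopless := ⟨by
    rintro x (h | h)
    · exact G.irrefl h.1
    · exact B.irrefl h.2⟩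

/-- left inclusion -/
def il (a : V) : GV t u := ⟨(a, u), Or.inr rfl⟩
/-- right inclusion -/
def ir (w : W) : GV t u := ⟨(t, w), Or.inl rfl⟩

theorem il_ir : il t u t = ir t u u := rfl

theorem cases_gv (x : GV t u) : (∃ a, x = il t u a) ∨ ∃ w, x = ir t u w := by
  obtain ⟨⟨a, w⟩, h | h⟩ := x
  · right; exact ⟨w, by simp at h; subst h; rfl⟩
  · left; exact ⟨a, by simp at h; subst h; rfl⟩

theorem il_inj : Function.Injective (il t u) := fun a b h => by simpa [il] using h
theorem ir_inj : Function.Injective (ir t u) := fun a b h => by simpa [ir] using h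

theorem il_adj {a b : V} (h : G.Adj a b) : (glue G B t u).Adj (il t u a) (il t u b) :=
  Or.inl ⟨h, rfl⟩
theorem ir_adj {a b : W} (h : B.Adj a b) : (glue G B t u).Adj (ir t u a) (ir t u b) :=
  Or.inr ⟨rfl, h⟩

theorem glue_wb {m n : ℕ} (hG : WB G m) (hB : WB B n) : WB (glue G B t u) (m + n) := by
  let fl : G →g glue G B t u := ⟨il t u, il_adj G B t u⟩
  let fr : B →g glue G B t u := ⟨ir t u, ir_adj G B t u⟩
  have h1 : ∀ a b, ∃ p : (glue G B t u).Walk (il t u a) (il t u b), p.length ≤ m := fun a b => by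
    obtain ⟨p, hp⟩ := hG a b
    exact ⟨p.map fl, by simpa using hp⟩
  have h2 : ∀ a b, ∃ p : (glue G B t u).Walk (ir t u a) (ir t u b), p.length ≤ n := fun a b => by
    obtain ⟨p, hp⟩ := hB a b
    exact ⟨p.map fr, by simpa using hp⟩
  have h3 : ∀ a b, ∃ p : (glue G B t u).Walk (il t u a) (ir t u b), p.length ≤ m + n :=
    fun a b => by
      have h1' := h1 a t
      rw [il_ir] at h1'
      obtain ⟨p, hp⟩ := h1'
      obtain ⟨r, hr⟩ := h2 u b
      exact ⟨p.append r, by rw [SimpleGraph.Walk.length_append]; omega⟩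
  intro x y
  rcases cases_gv t u x with ⟨a, rfl⟩ | ⟨a, rfl⟩ <;>
    rcases cases_gv t u y with ⟨b, rfl⟩ | ⟨b, rfl⟩
  · obtain ⟨p, hp⟩ := h1 a b
    exact ⟨p, by omega⟩
  · exact h3 a b
  · obtain ⟨p, hp⟩ := h3 b a
    exact ⟨p.reverse, by simpa using hp⟩
  · obtain ⟨p, hp⟩ := h2 a b
    exact ⟨p, by omega⟩

theorem glue_ec {n : ℕ} (hG : EC G n) (hB : EC B n) : EC (glue G B t u) n := by
  classical
  intro s hs
  have h1 : ∀ a b, ((glue G B t u).deleteEdges (s : Set (Sym2 (GV t u)))).Reachable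
      (il t u a) (il t u b) := fun a b => by
    have hi := Sym2.map.injective (il_inj t u)
    let s' := s.preimage (Sym2.map (il t u)) hi.injOn
    have hs' : s'.card ≤ s.card := Finset.card_le_card_of_injOn (Sym2.map (il t u))
      (fun x hx => by simpa [s'] using hx) hi.injOn
    let f : G.deleteEdges (s' : Set (Sym2 V)) →g
        (glue G B t u).deleteEdges (s : Set (Sym2 (GV t u))) :=
      ⟨il t u, fun {a b} h => by
        rw [SimpleGraph.deleteEdges_adj] at h ⊢
        exact ⟨il_adj G B t u h.1, by simpa [s'] using h.2⟩⟩
    exact (hG s' (by omega) a b).map f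
  have h2 : ∀ a b, ((glue G B t u).deleteEdges (s : Set (Sym2 (GV t u)))).Reachable
      (ir t u a) (ir t u b) := fun a b => by
    have hi := Sym2.map.injective (ir_inj t u)
    let s' := s.preimage (Sym2.map (ir t u)) hi.injOn
    have hs' : s'.card ≤ s.card := Finset.card_le_card_of_injOn (Sym2.map (ir t u))
      (fun x hx => by simpa [s'] using hx) hi.injOn
    let f : B.deleteEdges (s' : Set (Sym2 W)) →g
        (glue G B t u).deleteEdges (s : Set (Sym2 (GV t u))) :=
      ⟨ir t u, fun {a b} h => by
        rw [SimpleGraph.deleteEdges_adj] at h ⊢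
        exact ⟨ir_adj G B t u h.1, by simpa [s'] using h.2⟩⟩
    exact (hB s' (by omega) a b).map f
  have h3 : ∀ x, ((glue G B t u).deleteEdges (s : Set (Sym2 (GV t u)))).Reachable
      x (il t u t) := fun x => by
    rcases cases_gv t u x with ⟨a, rfl⟩ | ⟨a, rfl⟩
    · exact h1 _ _
    · exact h2 _ u
  intro x y
  exact (h3 x).trans (h3 y).symm

theorem glue_pot {s : V} {v : W} {m n : ℕ} (hG : Pot G s t m) (hB : Pot B u v n) :
    Pot (glue G B t u) (il t u s) (ir t u v) (m + n) := by
  obtain ⟨φ, h1, h2, h3⟩ := hG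
  obtain ⟨ψ, g1, g2, g3⟩ := hB
  refine ⟨fun x => φ x.1.1 + ψ x.1.2, by simp [il, h1, g1], by simp [ir, h2, g2], ?_⟩
  rintro x y (⟨h, e⟩ | ⟨e, h⟩)
  · have := h3 _ _ h
    simp only [e]; omega
  · have := g3 _ _ h
    simp only [e]; omega

theorem glue_cn (hG : CN G) (hB : CN B) : CN (glue G B t u) := by
  rintro ⟨⟨a1, a2⟩, ha⟩ ⟨⟨b1, b2⟩, hb⟩ ⟨⟨c1, c2⟩, hc⟩ ⟨⟨d1, d2⟩, hd⟩ h1 h2 h3 h4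
  have iG : ∀ x y, G.Adj x y → x ≠ y := fun x y h => h.ne
  have iB : ∀ x y, B.Adj x y → x ≠ y := fun x y h => h.ne
  have hG' := hG a1 b1 c1 d1
  have hB' := hB a2 b2 c2 d2
  simp only [glue] at h1 h2 h3 h4
  simp only [Subtype.mk.injEq, Prod.mk.injEq]
  simp only at ha hb hc hd
  clear hG hB
  grind

theorem glue_card [Fintype V] [Fintype W] [Fintype (GV t u)] :
    Fintype.card (GV t u) + 1 = Fintype.card V + Fintype.card W := by
  classical
  have e : GV t u ≃ V ⊕ {w : W // w ≠ u} :=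
    { toFun := fun x => if h : x.1.2 = u then Sum.inl x.1.1 else Sum.inr ⟨x.1.2, h⟩
      invFun := Sum.elim (il t u) (fun w => ir t u w)
      left_inv := by
        rintro ⟨⟨a, w⟩, h⟩
        by_cases hw : w = u
        · subst hw; simp [il]
        · have : a = t := by simpa [hw] using h
          subst this; simp [hw, ir]
      right_inv := by
        rintro (a | ⟨w, hw⟩)
        · simp [il]
        · simp [ir, hw] }
  rw [Fintype.card_congr e, Fintype.card_sum, Fintype.card_subtype_compl,
    Fintype.card_subtype_eq]
  have : 0 < Fintype.card W := Fintype.card_pos_iff.2 ⟨u⟩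
  omega

end glue

theorem chain [Fintype F] (hF : 7 ≤ Fintype.card F) (k : ℕ) :
    ∃ (V : Type) (_ : Fintype V) (G : SimpleGraph V) (s t : V),
      CN G ∧ WB G (4 * k) ∧ EC G (Fintype.card F - 6) ∧ Pot G s t (4 * k) ∧
      Fintype.card V = (Fintype.card F ^ 2 + Fintype.card F - 1) * k + 1 := by
  classical
  induction k with
  | zero =>
    refine ⟨Unit, inferInstance, ⊥, (), (), ?_, ?_, ?_, ?_, ?_⟩
    · intro p r x y _ _ _ _; exact Or.inl rfl
    · intro x y; exact ⟨.nil, by simp⟩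
    · intro s _ x y; exact SimpleGraph.Reachable.refl _
    · exact ⟨fun _ => 0, rfl, rfl, by simp⟩
    · simp
  | succ k ih =>
    obtain ⟨V, _, G, s, t, h1, h2, h3, h4, h5⟩ := ih
    refine ⟨GV t ((0, none) : F × Option F), inferInstance, glue G (block F) t (0, none), _, _,
      glue_cn _ _ _ _ h1 block_cn, glue_wb _ _ _ _ h2 (block_wb hF),
      glue_ec _ _ _ _ h3 (block_ec hF), glue_pot _ _ _ _ h4 block_pot, ?_⟩
    have := glue_card t ((0, none) : F × Option F)
    rw [h5, Fintype.card_prod, Fintype.card_option] at this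
    have e : Fintype.card F * (Fintype.card F + 1)
      = (Fintype.card F ^ 2 + Fintype.card F - 1) + 1 := by
      rw [Nat.sub_add_cancel (by omega)]; ring
    rw [e] at this
    rw [Nat.mul_succ]
    omega

theorem pot_walk {V : Type} {G : SimpleGraph V} (φ : V → ℕ)
    (h : ∀ x y, G.Adj x y → φ y ≤ φ x + 1) {x y : V} (p : G.Walk x y) :
    φ y ≤ φ x + p.length := by
  induction p with
  | nil => simp
  | cons ha p ih =>
    have := h _ _ ha
    rw [SimpleGraph.Walk.length_cons]
    omega

end C4Aux

open C4Aux in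
theorem exists_c4free_large_diam (q k : ℕ) (hq : IsPrimePow q) (hodd : Odd q)
    (hq7 : 7 ≤ q) (hk : 0 < k) :
    ∃ (V : Type) (_ : Fintype V) (G : SimpleGraph V),
      G.Connected ∧ C4Free G ∧
      Fintype.card V = (q ^ 2 + q - 1) * k + 1 ∧
      G.diam = 4 * k ∧
      EdgeConnAtLeast G (q - 6) := by
  classical
  obtain ⟨p, n, hp, hn, rfl⟩ := hq
  have : Fact p.Prime := ⟨Nat.prime_iff.2 hp⟩
  let : Fintype (GaloisField p n) := Fintype.ofFinite _
  have hc : Fintype.card (GaloisField p n) = p ^ n := by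
    rw [← Nat.card_eq_fintype_card]; exact GaloisField.card p n hn.ne'
  obtain ⟨V, hV, G, s, t, h1, h2, h3, ⟨φ, g1, g2, g3⟩, h5⟩ :=
    chain (F := GaloisField p n) (by omega) k
  rw [hc] at h3 h5
  have : Nonempty V := ⟨s⟩
  have hconn : G.Connected := ⟨fun x y => ⟨(h2 x y).choose⟩⟩
  refine ⟨V, hV, G, hconn, ?_, h5, ?_, ?_⟩
  · rintro ⟨a, b, c, d, hab, hac, had, hbc, hbd, hcd, e1, e2, e3, e4⟩
    rcases h1 a c b d e1 e4.symm e2.symm e3 with h | h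
    · exact hac h
    · exact hbd h
  · apply le_antisymm
    · obtain ⟨x, y, hxy⟩ := G.exists_dist_eq_diam
      rw [← hxy]
      obtain ⟨w, hw⟩ := h2 x y
      exact (SimpleGraph.dist_le w).trans hw
    · obtain ⟨w, hw⟩ := hconn.exists_walk_length_eq_dist s t
      have h6 := pot_walk φ g3 w
      have h7 : G.dist s t ≤ G.diam :=
        SimpleGraph.dist_le_diam (SimpleGraph.connected_iff_ediam_ne_top.1 hconn)
      omega
  · intro S hS
    exact ⟨h3 S hS⟩
end

section
/- For every positive integer k there exists a connected C4-free graph with edge-connectivity at least 3, order n = 5k + 18, and diameter d = 2k + 6; in particular d = (2n-6)/5. -/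
namespace TightThree

/-- Edges of the left end (vertices `0..9`). -/
def leftE : List (ℕ × ℕ) :=
  [(0, 1), (0, 2), (0, 3), (1, 2), (1, 4), (2, 5), (3, 6), (3, 7), (4, 6), (5, 6), (4, 9),
   (5, 8), (7, 8), (7, 9)]

/-- Edges of one period, relative to its first vertex. -/
def midE : List (ℕ × ℕ) := [(0, 2), (1, 3), (1, 4), (3, 4), (2, 5), (2, 6), (3, 5), (4, 6)]

/-- Edges of the right end, relative to its first vertex. -/
def rightE : List (ℕ × ℕ) :=
  [(8, 9), (7, 9), (6, 9), (7, 8), (5, 8), (4, 7), (3, 6), (2, 6), (3, 5), (2, 4), (0, 5),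
   (0, 4), (0, 3), (1, 2)]

def sh (k : ℕ) (e : ℕ × ℕ) : ℕ × ℕ := (8 + 5 * k + e.1, 8 + 5 * k + e.2)

def pre : ℕ → List (ℕ × ℕ)
  | 0 => leftE
  | k + 1 => pre k ++ midE.map (sh k)

def full (k : ℕ) : List (ℕ × ℕ) := pre k ++ rightE.map (sh k)

theorem mem_pre (k : ℕ) (e : ℕ × ℕ) :
    e ∈ pre k ↔ e ∈ leftE ∨ ∃ i < k, ∃ t ∈ midE, sh i t = e := by
  induction k with
  | zero => simp [pre]
  | succ k ih =>
    simp only [pre, List.mem_append, ih, List.mem_map]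
    constructor
    · rintro ((h | ⟨i, hi, h⟩) | h)
      · exact Or.inl h
      · exact Or.inr ⟨i, by omega, h⟩
      · exact Or.inr ⟨k, by omega, h⟩
    · rintro (h | ⟨i, hi, h⟩)
      · exact Or.inl (Or.inl h)
      · rcases Nat.lt_succ_iff_lt_or_eq.1 hi with h' | rfl
        · exact Or.inl (Or.inr ⟨i, h', h⟩)
        · exact Or.inr h

theorem mem_full (k : ℕ) (e : ℕ × ℕ) :
    e ∈ full k ↔ e ∈ leftE ∨ (∃ i < k, ∃ t ∈ midE, sh i t = e) ∨ ∃ t ∈ rightE, sh k t = e := by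
  simp only [full, List.mem_append, mem_pre, List.mem_map, or_assoc]

theorem leftE_b : ∀ e ∈ leftE, e.1 < e.2 ∧ e.2 ≤ 9 ∧ e.2 ≤ e.1 + 5 := by decide
theorem midE_b : ∀ e ∈ midE, e.1 < e.2 ∧ e.2 ≤ 6 ∧ e.2 ≤ e.1 + 5 ∧ 2 ≤ e.2 ∧ e.1 ≤ 4 := by decide
theorem rightE_b : ∀ e ∈ rightE, e.1 < e.2 ∧ e.2 ≤ 9 ∧ e.2 ≤ e.1 + 5 ∧ 2 ≤ e.2 := by decide

theorem full_b (k : ℕ) (e : ℕ × ℕ) (h : e ∈ full k) :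
    e.1 < e.2 ∧ e.2 < 5 * k + 18 ∧ e.2 ≤ e.1 + 5 := by
  rcases (mem_full k e).1 h with h | ⟨i, hi, t, ht, rfl⟩ | ⟨t, ht, rfl⟩
  · have := leftE_b e h; omega
  · have := midE_b t ht; simp only [sh]; omega
  · have := rightE_b t ht; simp only [sh]; omega

theorem pre_b (k : ℕ) (e : ℕ × ℕ) (h : e ∈ pre k) : e.2 < 5 * k + 10 := by
  rcases (mem_pre k e).1 h with h | ⟨i, hi, t, ht, rfl⟩
  · have := leftE_b e h; omega
  · have := midE_b t ht; simp only [sh]; omega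

theorem sh_inj (k : ℕ) : Function.Injective (sh k) := by
  rintro ⟨a, b⟩ ⟨c, d⟩ h
  simp only [sh, Prod.mk.injEq] at h ⊢
  omega

theorem pre_nodup (k : ℕ) : (pre k).Nodup := by
  induction k with
  | zero => decide
  | succ k ih =>
    refine List.Nodup.append ih ((by decide : midE.Nodup).map (sh_inj k)) ?_
    intro e he he'
    obtain ⟨t, ht, rfl⟩ := List.mem_map.1 he'
    have := pre_b _ _ he
    have := midE_b t ht
    simp only [sh] at *
    omega

theorem full_nodup (k : ℕ) : (full k).Nodup := by
  refine List.Nodup.append (pre_nodup k) ((by decide : rightE.Nodup).map (sh_inj k)) ?_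
  intro e he he'
  obtain ⟨t, ht, rfl⟩ := List.mem_map.1 he'
  have := pre_b _ _ he
  have := rightE_b t ht
  simp only [sh] at *
  omega

/-- Symmetrised adjacency on `ℕ`. -/
def A (k u v : ℕ) : Prop := (u, v) ∈ full k ∨ (v, u) ∈ full k

instance (k u v : ℕ) : Decidable (A k u v) := by unfold A; infer_instance

theorem A_symm {k u v : ℕ} (h : A k u v) : A k v u := Or.symm h

/-- The graph. -/
def G (k : ℕ) : SimpleGraph (Fin (5 * k + 18)) where
  Adj u v := A k u v
  symm := ⟨fun _ _ h => Or.symm h⟩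
  loopless := ⟨fun u h => by
    rcases h with h | h <;> exact absurd (full_b k _ h).1 (lt_irrefl _)⟩

/-! ### C4-freeness -/

def nb (k u : ℕ) : List ℕ :=
  (full k).filterMap fun e => if e.1 = u then some e.2 else if e.2 = u then some e.1 else none

theorem mem_nb {k u v : ℕ} (h : A k u v) : v ∈ nb k u := by
  rw [nb, List.mem_filterMap]
  rcases h with h | h
  · exact ⟨_, h, by simp⟩
  · refine ⟨_, h, ?_⟩
    have := (full_b k _ h).1
    simp only at this
    simp [this.ne]

def c4check (k : ℕ) : Bool :=
  (List.range (5 * k + 18)).all fun a => (nb k a).all fun b => (nb k b).all fun c =>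
    c == a || (nb k c).all fun d => d == b || !((nb k d).contains a)

theorem c4_small : ∀ k ≤ 4, c4check k = true := by decide +kernel

theorem c4_nat (k : ℕ) : ∀ a b c d, A k a b → A k b c → A k c d → A k d a → a ≠ c → b ≠ d →
    False := by
  by_cases hk : k ≤ 4
  · intro a b c d hab hbc hcd hda hac hbd
    have h := c4_small k hk
    have ha : a < 5 * k + 18 := by
      rcases hab with h | h <;> have := full_b _ _ h <;> simp only at this <;> omega
    simp only [c4check, List.all_eq_true, List.mem_range] at h
    have h1 := h a ha b (mem_nb hab) c (mem_nb hbc)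
    simp only [Bool.or_eq_true, beq_iff_eq, hac.symm, false_or, List.all_eq_true] at h1
    have h2 := h1 d (mem_nb hcd)
    simp [hbd.symm, mem_nb hda] at h2
  · obtain ⟨k, rfl⟩ : ∃ m, k = m + 1 := ⟨k - 1, by omega⟩
    have ih := c4_nat k
    intro a b c d hab hbc hcd hda hac hbd
    have span : ∀ {u v}, A (k + 1) u v → u ≤ v + 5 ∧ v ≤ u + 5 := by
      intro u v h
      rcases h with h | h <;> have := full_b _ _ h <;> simp only at this <;> omega
    have low : ∀ {u v}, u < 5 * k + 10 → v < 5 * k + 10 → A (k + 1) u v → A k u v := by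
      have key : ∀ {u v}, v < 5 * k + 10 → (u, v) ∈ full (k + 1) → (u, v) ∈ full k := by
        intro u v hv h
        rw [mem_full] at h ⊢
        rcases h with h | ⟨i, hi, t, ht, he⟩ | ⟨t, ht, he⟩
        · exact Or.inl h
        · refine Or.inr (Or.inl ⟨i, ?_, t, ht, he⟩)
          have := midE_b t ht
          simp only [sh, Prod.mk.injEq] at he
          omega
        · have := rightE_b t ht
          simp only [sh, Prod.mk.injEq] at he
          omega
      intro u v hu hv h
      exact h.imp (key hv) (key hu)
    have high : ∀ {u v}, 13 ≤ u → 13 ≤ v → A (k + 1) u v → A k (u - 5) (v - 5) := by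
      have key : ∀ {u v}, 13 ≤ u → (u, v) ∈ full (k + 1) → (u - 5, v - 5) ∈ full k := by
        intro u v hv h
        rw [mem_full] at h ⊢
        rcases h with h | ⟨i, hi, t, ht, he⟩ | ⟨t, ht, he⟩
        · have := leftE_b _ h
          simp only at this
          omega
        · have := midE_b t ht
          simp only [sh, Prod.mk.injEq] at he
          refine Or.inr (Or.inl ⟨i - 1, by omega, t, ht, ?_⟩)
          simp only [sh, Prod.mk.injEq]
          omega
        · simp only [sh, Prod.mk.injEq] at he
          refine Or.inr (Or.inr ⟨t, ht, ?_⟩)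
          simp only [sh, Prod.mk.injEq]
          omega
      intro u v hu hv h
      exact h.imp (key hu) (key hv)
    have s1 := span hab
    have s2 := span hbc
    have s3 := span hcd
    have s4 := span hda
    by_cases hm : 13 ≤ a ∧ 13 ≤ b ∧ 13 ≤ c ∧ 13 ≤ d
    · obtain ⟨h1, h2, h3, h4⟩ := hm
      exact ih _ _ _ _ (high h1 h2 hab) (high h2 h3 hbc) (high h3 h4 hcd) (high h4 h1 hda)
        (by omega) (by omega)
    · exact ih _ _ _ _ (low (by omega) (by omega) hab) (low (by omega) (by omega) hbc)
        (low (by omega) (by omega) hcd) (low (by omega) (by omega) hda) hac hbd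

theorem G_c4 (k : ℕ) : C4Free (G k) := by
  rintro ⟨a, b, c, d, -, hac, -, -, hbd, -, h1, h2, h3, h4⟩
  exact c4_nat k a b c d h1 h2 h3 h4 (fun h => hac (Fin.ext h)) (fun h => hbd (Fin.ext h))

/-! ### Edge-connectivity -/

def cut (f : ℕ → Bool) (l : List (ℕ × ℕ)) : ℕ := l.countP fun e => f e.1 != f e.2

set_option synthInstance.maxHeartbeats 2000000 in
set_option synthInstance.maxSize 10000 in
set_option maxHeartbeats 2000000 in
theorem left_cut (f : ℕ → Bool) :
    (f 8 ≠ f 9 → 2 ≤ cut f leftE) ∧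
    (f 8 = f 9 → (∀ j < 10, f j = f 8) ∨ 3 ≤ cut f leftE) := by
  have h : (∀ j < 10, f j = f 8) ↔ (f 0 = f 8 ∧ f 1 = f 8 ∧ f 2 = f 8 ∧ f 3 = f 8 ∧ f 4 = f 8 ∧
      f 5 = f 8 ∧ f 6 = f 8 ∧ f 7 = f 8 ∧ f 9 = f 8) := by
    constructor
    · intro h
      refine ⟨?_, ?_, ?_, ?_, ?_, ?_, ?_, ?_, ?_⟩ <;> exact h _ (by norm_num)
    · rintro ⟨h0, h1, h2, h3, h4, h5, h6, h7, h9⟩ j hj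
      interval_cases j <;> first | assumption | rfl
  rw [h]
  simp only [cut, leftE, List.countP_cons, List.countP_nil]
  generalize f 0 = a0
  generalize f 1 = a1
  generalize f 2 = a2
  generalize f 3 = a3
  generalize f 4 = a4
  generalize f 5 = a5
  generalize f 6 = a6
  generalize f 7 = a7
  generalize f 8 = a8
  generalize f 9 = a9
  clear h f
  revert a0 a1 a2 a3 a4 a5 a6 a7 a8 a9
  decide +kernel

theorem mid_cut (g : ℕ → Bool) :
    (g 0 ≠ g 1 → g 5 = g 6 → 1 ≤ cut g midE) ∧
    (g 0 = g 1 → g 5 ≠ g 6 → 2 ≤ cut g midE) ∧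
    (g 0 = g 1 → g 5 = g 6 → (∀ j < 7, g j = g 0) ∨ 3 ≤ cut g midE) := by
  have h : (∀ j < 7, g j = g 0) ↔ (g 1 = g 0 ∧ g 2 = g 0 ∧ g 3 = g 0 ∧ g 4 = g 0 ∧
      g 5 = g 0 ∧ g 6 = g 0) := by
    constructor
    · intro h
      refine ⟨?_, ?_, ?_, ?_, ?_, ?_⟩ <;> exact h _ (by norm_num)
    · rintro ⟨h1, h2, h3, h4, h5, h6⟩ j hj
      interval_cases j <;> first | assumption | rfl
  rw [h]
  simp only [cut, midE, List.countP_cons, List.countP_nil]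
  generalize g 0 = a0
  generalize g 1 = a1
  generalize g 2 = a2
  generalize g 3 = a3
  generalize g 4 = a4
  generalize g 5 = a5
  generalize g 6 = a6
  clear h g
  revert a0 a1 a2 a3 a4 a5 a6
  decide +kernel

set_option synthInstance.maxHeartbeats 2000000 in
set_option synthInstance.maxSize 10000 in
set_option maxHeartbeats 2000000 in
theorem right_cut (g : ℕ → Bool) :
    (g 0 ≠ g 1 → 1 ≤ cut g rightE) ∧
    (g 0 = g 1 → (∀ j < 10, g j = g 0) ∨ 3 ≤ cut g rightE) := by
  have h : (∀ j < 10, g j = g 0) ↔ (g 1 = g 0 ∧ g 2 = g 0 ∧ g 3 = g 0 ∧ g 4 = g 0 ∧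
      g 5 = g 0 ∧ g 6 = g 0 ∧ g 7 = g 0 ∧ g 8 = g 0 ∧ g 9 = g 0) := by
    constructor
    · intro h
      refine ⟨?_, ?_, ?_, ?_, ?_, ?_, ?_, ?_, ?_⟩ <;> exact h _ (by norm_num)
    · rintro ⟨h1, h2, h3, h4, h5, h6, h7, h8, h9⟩ j hj
      interval_cases j <;> first | assumption | rfl
  rw [h]
  simp only [cut, rightE, List.countP_cons, List.countP_nil]
  generalize g 0 = a0
  generalize g 1 = a1
  generalize g 2 = a2
  generalize g 3 = a3
  generalize g 4 = a4
  generalize g 5 = a5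
  generalize g 6 = a6
  generalize g 7 = a7
  generalize g 8 = a8
  generalize g 9 = a9
  clear h g
  revert a0 a1 a2 a3 a4 a5 a6 a7 a8 a9
  decide +kernel

theorem cut_append (f : ℕ → Bool) (l m : List (ℕ × ℕ)) : cut f (l ++ m) = cut f l + cut f m := by
  simp [cut, List.countP_append]

theorem cut_map (f : ℕ → Bool) (k : ℕ) (l : List (ℕ × ℕ)) :
    cut f (l.map (sh k)) = cut (fun j => f (8 + 5 * k + j)) l := by
  simp only [cut, List.countP_map]
  rfl

theorem pre_cut (f : ℕ → Bool) (k : ℕ) :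
    (f (8 + 5 * k) ≠ f (8 + 5 * k + 1) → 2 ≤ cut f (pre k)) ∧
    (f (8 + 5 * k) = f (8 + 5 * k + 1) →
      (∀ j < 10 + 5 * k, f j = f (8 + 5 * k)) ∨ 3 ≤ cut f (pre k)) := by
  induction k with
  | zero => exact left_cut f
  | succ k ih =>
    obtain ⟨i1, i2⟩ := ih
    obtain ⟨m1, m2, m3⟩ := mid_cut (fun j => f (8 + 5 * k + j))
    simp only [pre, cut_append, cut_map]
    rw [show 8 + 5 * (k + 1) = 8 + 5 * k + 5 by ring,
      show 8 + 5 * k + 5 + 1 = 8 + 5 * k + 6 by ring]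
    simp only [add_zero] at m1 m2 m3
    by_cases h0 : f (8 + 5 * k) = f (8 + 5 * k + 1)
    · refine ⟨fun h => by have := m2 h0 h; omega, fun h => ?_⟩
      rcases i2 h0 with hc | hc
      · rcases m3 h0 h with hd | hd
        · left
          intro j hj
          rw [hd 5 (by norm_num)]
          by_cases hj' : j < 10 + 5 * k
          · exact hc j hj'
          · have := hd (j - (8 + 5 * k)) (by omega)
            rwa [show 8 + 5 * k + (j - (8 + 5 * k)) = j by omega] at this
        · right; omega
      · right; omega
    · have := i1 h0
      refine ⟨fun h => by omega, fun h => ?_⟩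
      have := m1 h0 h
      right; omega

theorem full_cut (f : ℕ → Bool) (k : ℕ) :
    (∀ j < 5 * k + 18, f j = f (8 + 5 * k)) ∨ 3 ≤ cut f (full k) := by
  obtain ⟨i1, i2⟩ := pre_cut f k
  obtain ⟨m1, m2⟩ := right_cut (fun j => f (8 + 5 * k + j))
  simp only [full, cut_append, cut_map]
  simp only [add_zero] at m1 m2
  by_cases h0 : f (8 + 5 * k) = f (8 + 5 * k + 1)
  · rcases i2 h0 with hc | hc
    · rcases m2 h0 with hd | hd
      · left
        intro j hj
        by_cases hj' : j < 10 + 5 * k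
        · exact hc j hj'
        · have := hd (j - (8 + 5 * k)) (by omega)
          rwa [show 8 + 5 * k + (j - (8 + 5 * k)) = j by omega] at this
      · right; omega
    · right; omega
  · have := i1 h0
    have := m1 h0
    right; omega

theorem G_edge (k : ℕ) : EdgeConnAtLeast (G k) 3 := by
  classical
  intro s hs
  have : Nonempty (Fin (5 * k + 18)) := ⟨⟨0, by omega⟩⟩
  refine ⟨?_⟩
  intro u v
  let f : ℕ → Bool := fun j =>
    decide (∃ h : j < 5 * k + 18, ((G k).deleteEdges (s : Set (Sym2 _))).Reachable u ⟨j, h⟩)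
  have hf : ∀ w : Fin (5 * k + 18), f w = true ↔
      ((G k).deleteEdges (s : Set (Sym2 _))).Reachable u w := by
    intro w
    simp [f]
  rcases full_cut f k with h | h
  · have h1 := h u u.2
    have h2 := h v v.2
    rw [← hf v, h2, ← h1, hf u]
  · exfalso
    have hcard : cut f (full k) ≤ s.card := by
      calc cut f (full k) = ((full k).filter fun e => f e.1 != f e.2).toFinset.card := by
            rw [List.toFinset_card_of_nodup ((full_nodup k).filter _), cut,
              List.countP_eq_length_filter]
        _ ≤ (s.image (Sym2.map Fin.val)).card := by
            apply Finset.card_le_card_of_injOn (fun e => s(e.1, e.2))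
            · rintro ⟨p, q⟩ he
              simp only [List.coe_toFinset, List.mem_filter, Set.mem_setOf_eq] at he
              obtain ⟨he, hne⟩ := he
              have hb := full_b k _ he
              simp only at hb hne
              have hp : p < 5 * k + 18 := by omega
              have hq : q < 5 * k + 18 := by omega
              simp only [Finset.coe_image, Set.mem_image, Finset.mem_coe]
              refine ⟨s(⟨p, hp⟩, ⟨q, hq⟩), ?_, by simp⟩
              by_contra hns
              have hadj : ((G k).deleteEdges (s : Set (Sym2 _))).Adj ⟨p, hp⟩ ⟨q, hq⟩ := by
                rw [SimpleGraph.deleteEdges_adj]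
                exact ⟨Or.inl he, by simpa using hns⟩
              have e1 := hf ⟨p, hp⟩
              have e2 := hf ⟨q, hq⟩
              simp only at e1 e2
              have : f p = f q := by
                rw [Bool.eq_iff_iff, e1, e2]
                exact ⟨fun r => r.trans hadj.reachable, fun r => r.trans hadj.symm.reachable⟩
              simp [this] at hne
            · rintro ⟨p, q⟩ he ⟨p', q'⟩ he' heq
              simp only [List.coe_toFinset, List.mem_filter, Set.mem_setOf_eq] at he he'
              have hb := full_b k _ he.1
              have hb' := full_b k _ he'.1
              simp only [Sym2.eq_iff, Prod.mk.injEq] at heq hb hb' ⊢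
              omega
        _ ≤ s.card := Finset.card_image_le
    omega

theorem G_conn (k : ℕ) : (G k).Connected := by
  have := G_edge k ∅ (by simp)
  simpa using this

/-! ### Diameter -/

/-- Level of a vertex. -/
def lev (k j : ℕ) : ℕ :=
  if j = 0 then 0 else if j < 4 then 1 else if j < 8 then 2
  else if j < 10 + 5 * k then 3 + 2 * ((j - 8) / 5) + (if (j - 8) % 5 < 2 then 0 else 1)
  else if j < 14 + 5 * k then 4 + 2 * k else if j < 17 + 5 * k then 5 + 2 * k else 6 + 2 * k

theorem lev_mid {k j : ℕ} (i r : ℕ) (hj : j = 8 + 5 * i + r) (hr : r < 5) (h : j < 10 + 5 * k) :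
    lev k j = 3 + 2 * i + (if r < 2 then 0 else 1) := by
  have h1 : (j - 8) / 5 = i := by omega
  have h2 : (j - 8) % 5 = r := by omega
  unfold lev
  rw [if_neg (by omega), if_neg (by omega), if_neg (by omega), if_pos h, h1, h2]

theorem lev_right {k j : ℕ} (r : ℕ) (hj : j = 8 + 5 * k + r) (hr : 2 ≤ r) :
    lev k j = if r < 6 then 4 + 2 * k else if r < 9 then 5 + 2 * k else 6 + 2 * k := by
  subst hj
  unfold lev
  rw [if_neg (by omega), if_neg (by omega), if_neg (by omega), if_neg (by omega)]
  split_ifs <;> omega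

theorem lev_edge (k : ℕ) (e : ℕ × ℕ) (h : e ∈ full k) :
    lev k e.1 ≤ lev k e.2 + 1 ∧ lev k e.2 ≤ lev k e.1 + 1 := by
  rcases (mem_full k e).1 h with h | ⟨i, hi, t, ht, rfl⟩ | ⟨t, ht, rfl⟩
  · have l8 : lev k 8 = 3 := lev_mid 0 0 (by norm_num) (by norm_num) (by omega)
    have l9 : lev k 9 = 3 := lev_mid 0 1 (by norm_num) (by norm_num) (by omega)
    have l0 : lev k 0 = 0 := by simp [lev]
    have l1 : lev k 1 = 1 := by simp [lev]
    have l2 : lev k 2 = 1 := by simp [lev]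
    have l3 : lev k 3 = 1 := by simp [lev]
    have l4 : lev k 4 = 2 := by simp [lev]
    have l5 : lev k 5 = 2 := by simp [lev]
    have l6 : lev k 6 = 2 := by simp [lev]
    have l7 : lev k 7 = 2 := by simp [lev]
    simp only [leftE, List.mem_cons, List.not_mem_nil, or_false] at h
    rcases h with rfl | rfl | rfl | rfl | rfl | rfl | rfl | rfl | rfl | rfl | rfl | rfl | rfl | rfl <;>
      simp only [l0, l1, l2, l3, l4, l5, l6, l7, l8, l9] <;> norm_num
  · have l : ∀ r < 5, lev k (8 + 5 * i + r) = 3 + 2 * i + (if r < 2 then 0 else 1) :=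
      fun r hr => lev_mid i r rfl hr (by omega)
    have l0 := l 0 (by norm_num)
    have l1 := l 1 (by norm_num)
    have l2 := l 2 (by norm_num)
    have l3 := l 3 (by norm_num)
    have l4 := l 4 (by norm_num)
    have l5 : lev k (8 + 5 * i + 5) = 3 + 2 * (i + 1) :=
      lev_mid (i + 1) 0 (by ring) (by norm_num) (by omega)
    have l6 : lev k (8 + 5 * i + 6) = 3 + 2 * (i + 1) :=
      lev_mid (i + 1) 1 (by ring) (by norm_num) (by omega)
    norm_num at l0 l1 l2 l3 l4
    simp only [midE, List.mem_cons, List.not_mem_nil, or_false] at ht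
    rcases ht with rfl | rfl | rfl | rfl | rfl | rfl | rfl | rfl <;>
      simp only [sh, add_zero, l0, l1, l2, l3, l4, l5, l6] <;> omega
  · have l0 : lev k (8 + 5 * k) = 3 + 2 * k := lev_mid k 0 rfl (by norm_num) (by omega)
    have l1 : lev k (8 + 5 * k + 1) = 3 + 2 * k := lev_mid k 1 rfl (by norm_num) (by omega)
    have l2 := lev_right (k := k) 2 rfl (by norm_num)
    have l3 := lev_right (k := k) 3 rfl (by norm_num)
    have l4 := lev_right (k := k) 4 rfl (by norm_num)
    have l5 := lev_right (k := k) 5 rfl (by norm_num)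
    have l6 := lev_right (k := k) 6 rfl (by norm_num)
    have l7 := lev_right (k := k) 7 rfl (by norm_num)
    have l8 := lev_right (k := k) 8 rfl (by norm_num)
    have l9 := lev_right (k := k) 9 rfl (by norm_num)
    norm_num at l2 l3 l4 l5 l6 l7 l8 l9
    simp only [rightE, List.mem_cons, List.not_mem_nil, or_false] at ht
    rcases ht with rfl | rfl | rfl | rfl | rfl | rfl | rfl | rfl | rfl | rfl | rfl | rfl | rfl | rfl <;>
      simp only [sh, add_zero, l0, l1, l2, l3, l4, l5, l6, l7, l8, l9] <;> omega

theorem lev_walk (k : ℕ) {u v : Fin (5 * k + 18)} (w : (G k).Walk u v) :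
    lev k v ≤ lev k u + w.length := by
  induction w with
  | nil => simp
  | cons h p ih =>
    rw [SimpleGraph.Walk.length_cons]
    rcases h with h | h <;> have := lev_edge k _ h <;> simp only at this <;> omega

/-- Distance at most `m` between two (numbered) vertices. -/
def Near (k m p q : ℕ) : Prop :=
  ∃ (hp : p < 5 * k + 18) (hq : q < 5 * k + 18), (G k).dist ⟨p, hp⟩ ⟨q, hq⟩ ≤ m

theorem Near.trans {k m m' p q r : ℕ} (h : Near k m p q) (h' : Near k m' q r) :
    Near k (m + m') p r := by
  obtain ⟨hp, hq, h⟩ := h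
  obtain ⟨hq', hr, h'⟩ := h'
  exact ⟨hp, hr, ((G_conn k).dist_triangle).trans (add_le_add h h')⟩

theorem Near.symm {k m p q : ℕ} (h : Near k m p q) : Near k m q p := by
  obtain ⟨hp, hq, h⟩ := h
  exact ⟨hq, hp, by rwa [SimpleGraph.dist_comm]⟩

theorem Near.mono {k m m' p q : ℕ} (h : Near k m p q) (hm : m ≤ m') : Near k m' p q := by
  obtain ⟨hp, hq, h⟩ := h
  exact ⟨hp, hq, h.trans hm⟩

theorem near_self {k p m : ℕ} (hp : p < 5 * k + 18) : Near k m p p :=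
  ⟨hp, hp, by simp⟩

theorem near_edge {k p q : ℕ} (h : (p, q) ∈ full k) : Near k 1 p q := by
  have hb := full_b k _ h
  simp only at hb
  refine ⟨by omega, by omega, ?_⟩
  have hadj : (G k).Adj ⟨p, by omega⟩ ⟨q, by omega⟩ := Or.inl h
  exact (SimpleGraph.dist_eq_one_iff_adj.2 hadj).le

theorem near_left {k : ℕ} (p q : ℕ) (h : (p, q) ∈ leftE) : Near k 1 p q :=
  near_edge ((mem_full k _).2 (Or.inl h))

theorem near_mid {k i : ℕ} (hi : i < k) (p q : ℕ) (h : (p, q) ∈ midE) :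
    Near k 1 (8 + 5 * i + p) (8 + 5 * i + q) :=
  near_edge ((mem_full k _).2 (Or.inr (Or.inl ⟨i, hi, _, h, rfl⟩)))

theorem near_right {k : ℕ} (p q : ℕ) (h : (p, q) ∈ rightE) :
    Near k 1 (8 + 5 * k + p) (8 + 5 * k + q) :=
  near_edge ((mem_full k _).2 (Or.inr (Or.inr ⟨_, h, rfl⟩)))

/-- The spine. -/
def sp (j : ℕ) : ℕ := 8 + 5 * (j / 2) + 2 * (j % 2)

theorem near_sp_succ {k j : ℕ} (hj : j < 2 * k) : Near k 1 (sp j) (sp (j + 1)) := by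
  rcases Nat.even_or_odd' j with ⟨c, rfl | rfl⟩
  · have h := near_mid (k := k) (i := c) (by omega) 0 2 (by decide)
    convert h using 1 <;> simp only [sp] <;> omega
  · have h := near_mid (k := k) (i := c) (by omega) 2 5 (by decide)
    convert h using 1 <;> simp only [sp] <;> omega

theorem near_sp {k i t : ℕ} (h : i + t ≤ 2 * k) : Near k t (sp i) (sp (i + t)) := by
  induction t with
  | zero => exact near_self (by simp only [sp]; omega)
  | succ t ih => exact (ih (by omega)).trans (near_sp_succ (j := i + t) (by omega))

theorem attach {k u : ℕ} (hu : u < 5 * k + 18) : ∃ j ≤ 2 * k, Near k 3 u (sp j) := by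
  by_cases h8 : u < 8
  · refine ⟨0, by omega, ?_⟩
    have e5 : Near k 1 5 (sp 0) := near_left 5 8 (by decide)
    have e7 : Near k 1 7 (sp 0) := near_left 7 8 (by decide)
    have e2 : Near k 2 2 (sp 0) := (near_left 2 5 (by decide)).trans e5
    have e6 : Near k 2 6 (sp 0) := (near_left 5 6 (by decide)).symm.trans e5
    have e3 : Near k 2 3 (sp 0) := (near_left 3 7 (by decide)).trans e7
    have e0 : Near k 3 0 (sp 0) := (near_left 0 2 (by decide)).trans e2
    have e1 : Near k 3 1 (sp 0) := (near_left 1 2 (by decide)).trans e2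
    have e4 : Near k 3 4 (sp 0) := (near_left 4 6 (by decide)).trans e6
    interval_cases u
    · exact e0
    · exact e1
    · exact e2.mono (by norm_num)
    · exact e3.mono (by norm_num)
    · exact e4
    · exact e5.mono (by norm_num)
    · exact e6.mono (by norm_num)
    · exact e7.mono (by norm_num)
  · by_cases hr : u < 8 + 5 * k
    · obtain ⟨i, r, hi, hr5, rfl⟩ : ∃ i r, i < k ∧ r < 5 ∧ u = 8 + 5 * i + r :=
        ⟨(u - 8) / 5, (u - 8) % 5, by omega, by omega, by omega⟩
      refine ⟨2 * i + 2, by omega, ?_⟩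
      have hs : sp (2 * i + 2) = 8 + 5 * i + 5 := by simp only [sp]; omega
      rw [hs]
      have e2 := near_mid hi 2 5 (by decide)
      have e3 := near_mid hi 3 5 (by decide)
      have e0 := (near_mid hi 0 2 (by decide)).trans e2
      have e1 := (near_mid hi 1 3 (by decide)).trans e3
      have e4 := (near_mid hi 3 4 (by decide)).symm.trans e3
      interval_cases r
      · exact e0.mono (by norm_num)
      · exact e1.mono (by norm_num)
      · exact e2.mono (by norm_num)
      · exact e3.mono (by norm_num)
      · exact e4.mono (by norm_num)
    · obtain ⟨r, hr5, rfl⟩ : ∃ r, r < 10 ∧ u = 8 + 5 * k + r := ⟨u - (8 + 5 * k), by omega, by omega⟩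
      refine ⟨2 * k, le_rfl, ?_⟩
      have hs : sp (2 * k) = 8 + 5 * k + 0 := by simp only [sp]; omega
      rw [hs]
      have e5 := (near_right (k := k) 0 5 (by decide)).symm
      have e4 := (near_right (k := k) 0 4 (by decide)).symm
      have e3 := (near_right (k := k) 0 3 (by decide)).symm
      have e2 := (near_right (k := k) 2 4 (by decide)).trans e4
      have e1 := (near_right (k := k) 1 2 (by decide)).trans e2
      have e6 := (near_right (k := k) 3 6 (by decide)).symm.trans e3
      have e7 := (near_right (k := k) 4 7 (by decide)).symm.trans e4
      have e8 := (near_right (k := k) 5 8 (by decide)).symm.trans e5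
      have e9 := (near_right (k := k) 6 9 (by decide)).symm.trans e6
      interval_cases r
      · exact near_self hu
      · exact e1.mono (by norm_num)
      · exact e2.mono (by norm_num)
      · exact e3.mono (by norm_num)
      · exact e4.mono (by norm_num)
      · exact e5.mono (by norm_num)
      · exact e6.mono (by norm_num)
      · exact e7.mono (by norm_num)
      · exact e8.mono (by norm_num)
      · exact e9.mono (by norm_num)

theorem G_dist (k : ℕ) (u v : Fin (5 * k + 18)) : (G k).dist u v ≤ 2 * k + 6 := by
  obtain ⟨i, hi, hu⟩ := attach u.2
  obtain ⟨j, hj, hv⟩ := attach v.2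
  have hij : Near k (2 * k) (sp i) (sp j) := by
    rcases le_total i j with h | h
    · obtain ⟨t, rfl⟩ := Nat.exists_eq_add_of_le h
      exact (near_sp hj).mono (by omega)
    · obtain ⟨t, rfl⟩ := Nat.exists_eq_add_of_le h
      exact (near_sp hi).symm.mono (by omega)
  obtain ⟨_, _, h⟩ := ((hu.trans hij).trans hv.symm).mono (by omega : _ ≤ 2 * k + 6)
  exact h

theorem G_diam (k : ℕ) : (G k).diam = 2 * k + 6 := by
  have : Nonempty (Fin (5 * k + 18)) := ⟨⟨0, by omega⟩⟩
  apply le_antisymm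
  · obtain ⟨u, v, h⟩ := (G k).exists_dist_eq_diam
    rw [← h]
    exact G_dist k u v
  · have hle : (G k).dist ⟨0, by omega⟩ ⟨5 * k + 17, by omega⟩ ≤ (G k).diam :=
      SimpleGraph.dist_le_diam ((SimpleGraph.connected_iff_ediam_ne_top).1 (G_conn k))
    obtain ⟨w, hw⟩ := (G_conn k).exists_walk_length_eq_dist ⟨0, by omega⟩ ⟨5 * k + 17, by omega⟩
    have h1 : lev k (5 * k + 17) ≤ lev k 0 + w.length := lev_walk k w
    have h2 : lev k (5 * k + 17) = 6 + 2 * k := lev_right 9 (by ring) (by norm_num)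
    have h3 : lev k 0 = 0 := by simp [lev]
    rw [h2, h3] at h1
    omega

end TightThree

theorem exists_tight_edgeconn_three (k : ℕ) (hk : 0 < k) :
    ∃ (V : Type) (_ : Fintype V) (G : SimpleGraph V),
      G.Connected ∧ C4Free G ∧ EdgeConnAtLeast G 3 ∧
      Fintype.card V = 5 * k + 18 ∧
      G.diam = 2 * k + 6 ∧
      G.diam = (2 * Fintype.card V - 6) / 5 := by
  refine ⟨Fin (5 * k + 18), inferInstance, TightThree.G k, TightThree.G_conn k,
    TightThree.G_c4 k, TightThree.G_edge k, by simp, TightThree.G_diam k, ?_⟩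
  rw [TightThree.G_diam, Fintype.card_fin]
  omega
end
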